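/- arXiv:1504.00296 — 3 statements merged into one kernel-verified Lean document; each statement's English description precedes it below -/
import Mathlib

section
/- In the coupon collector process with B ≥ 1 distinct coupons, where coupons are drawn independently and uniformly at random, the expected value of the stopping time T_B (the first time n at which all B distinct coupons have appeared among the first n draws) equals B·H(B), where H(B) = Σ_{i=1}^{B} 1/i is the B-th harmonic number. -/
open MeasureTheory ProbabilityTheory
open scoped ENNReal

/-- The `n`-th harmonic number `H(n) = ∑_{i=1}^n 1/i`, as a real number. -/
noncomputable def H (n : ℕ) : ℝ := ∑ i ∈ Finset.Icc 1 n, (1 : ℝ) / i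

/-- The uniform probability measure on `Fin B`. -/
noncomputable def uniformFin (B : ℕ) : Measure (Fin B) :=
  (B : ℝ≥0∞)⁻¹ • Measure.count

/-- The coupon collector stopping time: the least `n` such that all `B` distinct coupons
appear among the first `n` draws `ω 0, …, ω (n-1)`. -/
noncomputable def coverTime (B : ℕ) (ω : ℕ → Fin B) : ℕ :=
  sInf {n : ℕ | ∀ c : Fin B, ∃ i < n, ω i = c}

/-!
The time needed to collect everything is the number of `n` for which some coupon is missing from the
first `n` draws, so its expectation is `∑ₙ P(some coupon is missing after n draws)`. By
inclusion-exclusion the `n`-th probability is the alternating sum over nonempty sets `S` of coupons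
of `P(no draw before n lies in S) = (1 - ν S) ^ n`. Summing the geometric series over `n` leaves
`∑_S (-1) ^ (|S| + 1) / ν S`, and for uniform `ν` the identity
`∑_{k=1}^n (-1) ^ (k + 1) (n choose k) / k = 1 + 1/2 + ⋯ + 1/n` evaluates this sum.
-/

open scoped Finset

theorem sum_range_neg_one_pow_mul_choose_div_eq_harmonic (n : ℕ) :
    ∑ k ∈ Finset.range (n + 1), (-1 : ℚ) ^ (k + 1) * n.choose k / k = harmonic n := by
  suffices h : ∑ k ∈ Finset.range n, (-1 : ℚ) ^ k * n.choose (k + 1) / (k + 1) = harmonic n by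
    rw [Finset.sum_range_succ', ← h]
    simp [pow_succ]
  induction n with
  | zero => simp
  | succ n ih =>
    have absorb (k : ℕ) : (n + 1 : ℚ) * n.choose k = (n + 1).choose (k + 1) * (k + 1) := mod_cast
      Nat.add_one_mul_choose_eq n k
    have pascal (k : ℕ) : ((n + 1).choose (k + 1) : ℚ) = n.choose k + n.choose (k + 1) := mod_cast
      Nat.choose_succ_succ n k
    have split_term (k : ℕ) : (-1 : ℚ) ^ k * (n + 1).choose (k + 1) / (k + 1) =
        (-1) ^ k * n.choose (k + 1) / (k + 1) +
          (-1) ^ k * (n + 1).choose (k + 1) / (n + 1) := by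
      field_simp
      linear_combination (n + 1 : ℚ) * pascal k + absorb k
    have alternating : ∑ k ∈ Finset.range (n + 1), (-1 : ℚ) ^ k * (n + 1).choose (k + 1) = 1 := by
      have h : ∑ k ∈ Finset.range (n + 2), (-1 : ℚ) ^ k * (n + 1).choose k = 0 := mod_cast
        Int.alternating_sum_range_choose_of_ne n.succ_ne_zero
      rw [Finset.sum_range_succ'] at h
      simpa [pow_succ, neg_add_eq_zero] using h
    simp_rw [split_term, Finset.sum_add_distrib, ← Finset.sum_div, alternating]
    rw [Finset.sum_range_succ, ih, harmonic_succ]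
    simp

theorem sum_powerset_neg_one_pow_div_card_eq_harmonic {ι : Type*} (t : Finset ι) :
    ∑ S ∈ t.powerset with S.Nonempty, (-1 : ℚ) ^ (#S + 1) / #S = harmonic #t := by
  calc
    ∑ S ∈ t.powerset with S.Nonempty, (-1 : ℚ) ^ (#S + 1) / #S
      = ∑ S ∈ t.powerset, (-1 : ℚ) ^ (#S + 1) / #S :=
        Finset.sum_filter_of_ne fun S _ hS ↦ by
          rw [Finset.nonempty_iff_ne_empty]
          rintro rfl
          simp at hS
    _ = ∑ k ∈ Finset.range (#t + 1), (#t).choose k • ((-1 : ℚ) ^ (k + 1) / k) :=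
        Finset.sum_powerset_apply_card fun k : ℕ ↦ (-1 : ℚ) ^ (k + 1) / k
    _ = harmonic #t := by
        rw [← sum_range_neg_one_pow_mul_choose_div_eq_harmonic]
        refine Finset.sum_congr rfl fun k _ ↦ ?_
        rw [nsmul_eq_mul]
        ring

/-- The junk values agree too: for `s = ∅` both sides are `0`. -/
theorem sInf_eq_ncard_compl_of_isUpperSet {s : Set ℕ} (hs : IsUpperSet s) :
    sInf s = sᶜ.ncard := by
  obtain rfl | hne := s.eq_empty_or_nonempty
  · simp [Set.infinite_univ.ncard]
  · have hcompl : sᶜ = Set.Iio (sInf s) := by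
      ext n
      exact ⟨fun hn ↦ not_le.1 fun hle ↦ hn (hs hle (Nat.sInf_mem hne)), Nat.notMem_of_lt_sInf⟩
    simp [hcompl, Set.ncard_eq_toFinset_card']

theorem encard_setOf_mem_eq_tsum_indicator {Ω ι : Type*} (A : ι → Set Ω) (ω : Ω) :
    ({i | ω ∈ A i}.encard : ℝ≥0∞) = ∑' i, (A i).indicator 1 ω := by
  rw [← ENNReal.tsum_set_one, tsum_subtype {i | ω ∈ A i} fun _ ↦ (1 : ℝ≥0∞)]
  rfl

section CountingEvents

variable {Ω ι : Type*} [MeasurableSpace Ω] {μ : Measure Ω} [Countable ι] {A : ι → Set Ω}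

theorem aemeasurable_encard_setOf_mem (hA : ∀ i, NullMeasurableSet (A i) μ) :
    AEMeasurable (fun ω ↦ ({i | ω ∈ A i}.encard : ℝ≥0∞)) μ := by
  simp_rw [encard_setOf_mem_eq_tsum_indicator]
  exact .tsum fun i ↦ aemeasurable_one.indicator₀ (hA i)

theorem lintegral_encard_setOf_mem (hA : ∀ i, NullMeasurableSet (A i) μ) :
    ∫⁻ ω, {i | ω ∈ A i}.encard ∂μ = ∑' i, μ (A i) := by
  have hmeas (i : ι) : AEMeasurable ((A i).indicator (1 : Ω → ℝ≥0∞)) μ :=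
    aemeasurable_one.indicator₀ (hA i)
  simp_rw [encard_setOf_mem_eq_tsum_indicator, lintegral_tsum hmeas,
    lintegral_indicator_one₀ (hA _)]

theorem integral_ncard_setOf_mem (hA : ∀ i, NullMeasurableSet (A i) μ)
    (hsum : ∑' i, μ (A i) ≠ ∞) :
    ∫ ω, ({i | ω ∈ A i}.ncard : ℝ) ∂μ = ∑' i, μ.real (A i) := by
  have hencard := aemeasurable_encard_setOf_mem hA
  have hfinite : ∀ᵐ ω ∂μ, ({i | ω ∈ A i}.encard : ℝ≥0∞) < ∞ :=
    ae_lt_top' hencard (lintegral_encard_setOf_mem hA ▸ hsum)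
  have hncard (ω : Ω) : ({i | ω ∈ A i}.ncard : ℝ) = ({i | ω ∈ A i}.encard : ℝ≥0∞).toReal := by
    rw [Set.ncard_def]
    cases {i | ω ∈ A i}.encard <;> simp
  simp_rw [hncard]
  rw [integral_toReal hencard hfinite, lintegral_encard_setOf_mem hA]
  exact ENNReal.tsum_toReal_eq (ENNReal.ne_top_of_tsum_ne_top hsum)

end CountingEvents

/-- The event that none of the first `n` draws `X 0, …, X (n - 1)` lies in `S`. -/
def missed {Ω α : Type*} (X : ℕ → Ω → α) (S : Set α) (n : ℕ) : Set Ω :=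
  {ω | ∀ i < n, X i ω ∉ S}

theorem missed_eq_biInter_preimage {Ω α : Type*} (X : ℕ → Ω → α) (S : Set α) (n : ℕ) :
    missed X S n = ⋂ i ∈ Finset.range n, X i ⁻¹' Sᶜ := by
  ext ω
  simp [missed]

theorem biInter_missed_singleton {Ω α : Type*} (X : ℕ → Ω → α) (S : Finset α) (n : ℕ) :
    ⋂ c ∈ S, missed X {c} n = missed X S n := by
  ext ω
  simp only [missed, Set.mem_iInter, Set.mem_ofPred_eq, Set.mem_singleton_iff, Finset.mem_coe]
  grind

/-- The least `n` such that the first `n` terms `x 0, …, x (n - 1)` exhaust `α`, with the junk value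
`0` if there is no such `n`. -/
noncomputable def collectionTime {α : Type*} (x : ℕ → α) : ℕ :=
  sInf {n | ∀ c, ∃ i < n, x i = c}

theorem collectionTime_eq_ncard {Ω α : Type*} (X : ℕ → Ω → α) (ω : Ω) :
    collectionTime (X · ω) = {n | ω ∈ ⋃ c, missed X {c} n}.ncard := by
  have hupper : IsUpperSet {n | ∀ c, ∃ i < n, X i ω = c} := fun m n hmn hm c ↦
    let ⟨i, him, hi⟩ := hm c
    ⟨i, him.trans_le hmn, hi⟩
  rw [collectionTime, sInf_eq_ncard_compl_of_isUpperSet hupper]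
  congr 1
  ext n
  simp [missed]

section Draws

variable {Ω α : Type*} [MeasurableSpace Ω] [MeasurableSpace α] {μ : Measure Ω} {ν : Measure α}
  {X : ℕ → Ω → α}

theorem measurableSet_missed (hX : ∀ i, Measurable (X i)) {S : Set α} (hS : MeasurableSet S)
    (n : ℕ) : MeasurableSet (missed X S n) := by
  rw [missed_eq_biInter_preimage]
  exact Finset.measurableSet_biInter _ fun i _ ↦ hX i hS.compl

theorem measureReal_missed [IsProbabilityMeasure ν] (hindep : iIndepFun X μ)
    (hX : ∀ i, MeasurePreserving (X i) μ ν) {S : Set α} (hS : MeasurableSet S) (n : ℕ) :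
    μ.real (missed X S n) = (1 - ν.real S) ^ n := by
  rw [missed_eq_biInter_preimage, measureReal_def,
    hindep.measure_inter_preimage_eq_mul _ fun _ _ ↦ hS.compl]
  simp_rw [(hX _).measure_preimage hS.compl.nullMeasurableSet]
  rw [Finset.prod_const, Finset.card_range, ENNReal.toReal_pow, ← measureReal_def,
    probReal_compl_eq_one_sub hS]

variable [Fintype α] [MeasurableSingletonClass α]

theorem measureReal_iUnion_missed_singleton [IsProbabilityMeasure ν] (hindep : iIndepFun X μ)
    (hX : ∀ i, MeasurePreserving (X i) μ ν) (n : ℕ) :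
    μ.real (⋃ c, missed X {c} n) =
      ∑ S : Finset α with S.Nonempty, (-1) ^ (#S + 1) * (1 - ν.real S) ^ n := by
  have := hindep.isProbabilityMeasure
  have h := measureReal_biUnion_eq_sum_powerset (μ := μ) (t := Finset.univ)
    fun c (_ : c ∈ Finset.univ) ↦
      measurableSet_missed (fun i ↦ (hX i).measurable) (measurableSet_singleton c) n
  simpa only [Finset.mem_univ, Set.iUnion_true, Finset.powerset_univ, biInter_missed_singleton,
    measureReal_missed hindep hX (Finset.measurableSet _)] using h

theorem hasSum_measureReal_iUnion_missed_singleton [IsProbabilityMeasure ν]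
    (hindep : iIndepFun X μ) (hX : ∀ i, MeasurePreserving (X i) μ ν) (hν : ∀ c, ν {c} ≠ 0) :
    HasSum (fun n ↦ μ.real (⋃ c, missed X {c} n))
      (∑ S : Finset α with S.Nonempty, (-1) ^ (#S + 1) / ν.real S) := by
  simp_rw [measureReal_iUnion_missed_singleton hindep hX]
  refine hasSum_sum fun S hS ↦ ?_
  obtain ⟨c, hc⟩ := (Finset.mem_filter.1 hS).2
  have hpos : 0 < ν.real S :=
    ENNReal.toReal_pos (mt (measure_mono_null (Set.singleton_subset_iff.2 hc)) (hν c))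
      (measure_ne_top ν _)
  have hgeom : HasSum (fun n ↦ (1 - ν.real S) ^ n) (ν.real S)⁻¹ := by
    simpa only [sub_sub_cancel] using
      hasSum_geometric_of_lt_one (sub_nonneg.2 measureReal_le_one) (sub_lt_self 1 hpos)
  exact hgeom.mul_left _

theorem integral_collectionTime [IsProbabilityMeasure ν] (hindep : iIndepFun X μ)
    (hX : ∀ i, MeasurePreserving (X i) μ ν) (hν : ∀ c, ν {c} ≠ 0) :
    ∫ ω, (collectionTime (X · ω) : ℝ) ∂μ =
      ∑ S : Finset α with S.Nonempty, (-1) ^ (#S + 1) / ν.real S := by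
  have := hindep.isProbabilityMeasure
  have hmeas (n : ℕ) : MeasurableSet (⋃ c, missed X {c} n) := .iUnion fun c ↦
    measurableSet_missed (fun i ↦ (hX i).measurable) (measurableSet_singleton c) n
  have htail := hasSum_measureReal_iUnion_missed_singleton hindep hX hν
  have hfinite : ∑' n, μ (⋃ c, missed X {c} n) ≠ ∞ := by
    simpa using htail.summable.tsum_ofReal_ne_top
  simp_rw [collectionTime_eq_ncard]
  rw [integral_ncard_setOf_mem (fun n ↦ (hmeas n).nullMeasurableSet) hfinite, htail.tsum_eq]

theorem coupon_collector_expectation_general (hindep : iIndepFun X μ)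
    (hX : ∀ i, MeasurePreserving (X i) μ (uniformOn Set.univ)) :
    ∫ ω, (collectionTime (X · ω) : ℝ) ∂μ = Fintype.card α * harmonic (Fintype.card α) := by
  have := hindep.isProbabilityMeasure
  have : Nonempty α := (nonempty_of_isProbabilityMeasure μ).map (X 0)
  have hunif (S : Finset α) : (uniformOn Set.univ : Measure α).real S = #S / Fintype.card α := by
    simp [measureReal_def, uniformOn_univ]
  rw [integral_collectionTime hindep hX (by simp [uniformOn_univ]), ← Finset.card_univ,
    ← sum_powerset_neg_one_pow_div_card_eq_harmonic]
  push_cast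
  rw [Finset.mul_sum, Finset.powerset_univ]
  refine Finset.sum_congr rfl fun S _ ↦ ?_
  rw [hunif, Finset.card_univ, div_div_eq_mul_div, mul_comm, mul_div_assoc]

end Draws

theorem uniformFin_eq_uniformOn_univ (B : ℕ) : uniformFin B = uniformOn Set.univ := by
  ext s
  simp [uniformFin, uniformOn_univ, ENNReal.div_eq_inv_mul]

theorem H_eq_harmonic (n : ℕ) : H n = harmonic n := by
  simp [H, harmonic_eq_sum_Icc]

/-- **Coupon collector's problem.** If `μ` is a probability measure on `ℕ → Fin B` under which
the coordinates (draws) are independent and each is uniformly distributed on the `B ≥ 1` coupons,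
then the expected value of the stopping time `T_B` equals `B * H(B)`. -/
theorem coupon_collector_expectation
    (B : ℕ) (hB : 1 ≤ B) (μ : Measure (ℕ → Fin B)) [IsProbabilityMeasure μ]
    (hIndep : iIndepFun (fun i (ω : ℕ → Fin B) => ω i) μ)
    (hUnif : ∀ i : ℕ, μ.map (fun ω => ω i) = uniformFin B) :
    ∫ ω, (coverTime B ω : ℝ) ∂μ = B * H B := by
  have hcover : coverTime B = collectionTime := rfl
  simpa only [hcover, Fintype.card_fin, ← H_eq_harmonic] using
    coupon_collector_expectation_general hIndep fun i ↦
      ⟨measurable_pi_apply i, (hUnif i).trans (uniformFin_eq_uniformOn_univ B)⟩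
end

section
/- In the coupon collector process with B distinct coupons and replacement parameter K with 1 ≤ K ≤ B, where coupons are drawn independently and uniformly at random, the variance of the stopping time T_{B,K} (the first time at least B − K distinct coupons have appeared) equals B²·(H₂(B) − H₂(K)) − B·(H(B) − H(K)). -/
open MeasureTheory ProbabilityTheory
open scoped ENNReal

/-- The `n`-th generalized harmonic number of order 2, `H₂(n) = ∑_{i=1}^n 1/i²`. -/
noncomputable def H2 (n : ℕ) : ℝ := ∑ i ∈ Finset.Icc 1 n, (1 : ℝ) / (i : ℝ) ^ 2

/-- The stopping time `T_{B,K}`: the least `n` such that at least `B - K` distinct coupons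
appear among the first `n` draws. -/
noncomputable def collectTime (B K : ℕ) (ω : ℕ → Fin B) : ℕ :=
  sInf {n : ℕ | B - K ≤ (Finset.image ω (Finset.range n)).card}

/-!
Let `T m` be the number of draws needed to see `m` distinct coupons. Almost surely
`T (m + 1) = T m + R m + 1`, where `R m` counts the repeated coupons drawn in between. On the event
that `T m = a` and that the coupons seen by then form the set `s`, the inequality `k ≤ R m` says
that the draws `a, …, a + k - 1` all lie in `s`; these are independent of the first `a` draws, so
this has conditional probability `(m / B) ^ k` whatever `a` and `s` are. Hence `R m` is geometric
with success probability `1 - m / B` and independent of `T m`, its variance is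
`B * m / (B - m) ^ 2`, and `Var[T m]` is the sum of these variances.
-/

namespace CouponCollector

open Finset Function

section Path

variable {α : Type*} [DecidableEq α]

/-- The set of distinct coupons among the first `n` draws `x 0, …, x (n - 1)`. -/
def seen (x : ℕ → α) (n : ℕ) : Finset α := (range n).image x

/-- The number of draws needed to see `m` distinct coupons; it takes the junk value `0` on draw
sequences containing fewer than `m` distinct coupons. -/
noncomputable def collectionTime (x : ℕ → α) (m : ℕ) : ℕ := sInf {n | m ≤ #(seen x n)}

/-- The number of draws wasted on already seen coupons strictly between the draws of the `m`-th
and the `(m + 1)`-th new coupon. -/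
noncomputable def repeats (x : ℕ → α) (m : ℕ) : ℕ :=
  collectionTime x (m + 1) - collectionTime x m - 1

variable {x : ℕ → α} {m n : ℕ}

lemma seen_mono : Monotone (seen x) := fun _ _ h ↦ image_subset_image (range_mono h)

lemma seen_succ (x : ℕ → α) (n : ℕ) : seen x (n + 1) = insert (x n) (seen x n) := by
  rw [seen, range_add_one, image_insert, seen]

lemma seen_add (x : ℕ → α) (n k : ℕ) :
    seen x (n + k) = seen x n ∪ (Ico n (n + k)).image x := by
  simp only [seen, range_eq_Ico, ← image_union, Ico_union_Ico_eq_Ico n.zero_le (n.le_add_right k)]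

lemma exists_seen_eq_univ [Fintype α] (hx : Surjective x) : ∃ n, seen x n = univ := by
  choose g hg using hx
  refine ⟨univ.sup g + 1, eq_univ_of_forall fun y ↦ mem_image.2 ⟨g y, ?_, hg y⟩⟩
  exact mem_range.2 (Nat.lt_succ_of_le (le_sup (mem_univ y)))

lemma exists_le_card_seen [Fintype α] (hx : Surjective x) (hm : m ≤ Fintype.card α) :
    ∃ n, m ≤ #(seen x n) := by
  obtain ⟨n, hn⟩ := exists_seen_eq_univ hx
  exact ⟨n, by rwa [hn, card_univ]⟩

lemma collectionTime_zero (x : ℕ → α) : collectionTime x 0 = 0 :=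
  Nat.sInf_eq_zero.2 (.inl (Nat.zero_le _))

lemma collectionTime_le_iff (h : ∃ n, m ≤ #(seen x n)) :
    collectionTime x m ≤ n ↔ m ≤ #(seen x n) :=
  ⟨fun hn ↦ (Nat.sInf_mem (s := {n | m ≤ #(seen x n)}) h).out.trans (card_le_card (seen_mono hn)),
    fun hn ↦ Nat.sInf_le hn⟩

lemma lt_collectionTime_iff (h : ∃ n, m ≤ #(seen x n)) :
    n < collectionTime x m ↔ #(seen x n) < m := by
  rw [← not_le, collectionTime_le_iff h, not_le]

lemma collectionTime_eq_iff_of_card_seen_eq (h : #(seen x n) = m) :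
    collectionTime x m = n ↔ ∀ i < n, #(seen x i) < m := by
  have hex : ∃ n, m ≤ #(seen x n) := ⟨n, h.ge⟩
  rw [← ((collectionTime_le_iff hex).2 h.ge).ge_iff_eq]
  exact ⟨fun hn i hi ↦ (lt_collectionTime_iff hex).1 (hi.trans_le hn),
    fun hn ↦ le_of_forall_lt fun i hi ↦ (lt_collectionTime_iff hex).2 (hn i hi)⟩

lemma card_seen_collectionTime (h : ∃ n, m ≤ #(seen x n)) :
    #(seen x (collectionTime x m)) = m := by
  refine le_antisymm ?_ ((collectionTime_le_iff h).1 le_rfl)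
  rcases ht : collectionTime x m with _ | t
  · simp [seen]
  · have ht' : #(seen x t) < m := (lt_collectionTime_iff h).1 (by omega)
    rw [seen_succ]
    exact (card_insert_le _ _).trans ht'

lemma add_lt_collectionTime_succ_iff (h : ∃ n, m + 1 ≤ #(seen x n)) (k : ℕ) :
    collectionTime x m + k < collectionTime x (m + 1) ↔
      ∀ i ∈ Ico (collectionTime x m) (collectionTime x m + k),
        x i ∈ seen x (collectionTime x m) := by
  have hcard : #(seen x (collectionTime x m)) = m :=
    card_seen_collectionTime (h.imp fun _ hn ↦ m.le_succ.trans hn)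
  rw [lt_collectionTime_iff h, Nat.lt_succ_iff, seen_add, ← image_subset_iff]
  refine ⟨fun hle ↦ ?_, fun hsub ↦ by rw [union_eq_left.2 hsub, hcard]⟩
  exact union_eq_left.1 (eq_of_subset_of_card_le subset_union_left (hle.trans_eq hcard.symm)).symm

lemma collectionTime_lt_succ (h : ∃ n, m + 1 ≤ #(seen x n)) :
    collectionTime x m < collectionTime x (m + 1) :=
  (add_lt_collectionTime_succ_iff h 0).2 (by simp)

lemma collectionTime_succ (h : ∃ n, m + 1 ≤ #(seen x n)) :
    collectionTime x (m + 1) = collectionTime x m + repeats x m + 1 := by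
  have := collectionTime_lt_succ h
  unfold repeats
  omega

lemma le_repeats_iff (h : ∃ n, m + 1 ≤ #(seen x n)) (k : ℕ) :
    k ≤ repeats x m ↔
      ∀ i ∈ Ico (collectionTime x m) (collectionTime x m + k),
        x i ∈ seen x (collectionTime x m) := by
  rw [← add_lt_collectionTime_succ_iff h, collectionTime_succ h]
  omega

end Path

lemma measurable_sInf_setOf {Ω : Type*} [MeasurableSpace Ω] {q : Ω → ℕ → Prop}
    (hq : ∀ n, MeasurableSet {ω | q ω n}) : Measurable fun ω ↦ sInf {n | q ω n} := by
  refine measurable_of_Ioi fun n ↦ ?_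
  have hset : (fun ω ↦ sInf {n | q ω n}) ⁻¹' Set.Ioi n =
      (⋃ k, {ω | q ω k}) ∩ ⋂ i ∈ Set.Iic n, {ω | q ω i}ᶜ := by
    ext ω
    simp only [Set.mem_preimage, Set.mem_Ioi, Set.mem_inter_iff, Set.mem_iUnion, Set.mem_iInter,
      Set.mem_ofPred_eq, Set.mem_compl_iff, Set.mem_Iic]
    constructor
    · intro h
      exact ⟨Nat.nonempty_of_pos_sInf (n.zero_le.trans_lt h),
        fun i hi ↦ Nat.notMem_of_lt_sInf (hi.trans_lt h)⟩
    · rintro ⟨hne, hlt⟩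
      exact not_le.1 fun hle ↦ hlt _ hle (Nat.sInf_mem hne)
  rw [hset]
  exact (MeasurableSet.iUnion hq).inter <|
    MeasurableSet.biInter (Set.to_countable _) fun i _ ↦ (hq i).compl

section Geometric

variable {p : unitInterval}

lemma hasSum_cast_mul_geometric {r : ℝ} (hr : ‖r‖ < 1) :
    HasSum (fun n : ℕ ↦ (n : ℝ) * r ^ n) (1 / (1 - r) ^ 2 - 1 / (1 - r)) := by
  convert! (hasSum_choose_mul_geometric_of_norm_lt_one 1 hr).sub
    (hasSum_choose_mul_geometric_of_norm_lt_one 0 hr) using 1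
  · ext n
    rw [Nat.choose_one_right, Nat.choose_zero_right]
    push_cast
    ring
  · norm_num

lemma hasSum_cast_sq_mul_geometric {r : ℝ} (hr : ‖r‖ < 1) :
    HasSum (fun n : ℕ ↦ (n : ℝ) ^ 2 * r ^ n)
      (2 / (1 - r) ^ 3 - 3 / (1 - r) ^ 2 + 1 / (1 - r)) := by
  convert! (((hasSum_choose_mul_geometric_of_norm_lt_one 2 hr).mul_left 2).sub
    ((hasSum_choose_mul_geometric_of_norm_lt_one 1 hr).mul_left 3)).add
    (hasSum_choose_mul_geometric_of_norm_lt_one 0 hr) using 1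
  · ext n
    rw [Nat.cast_choose_two, Nat.choose_one_right, Nat.choose_zero_right]
    push_cast
    ring
  · ring

lemma norm_one_sub_coe_lt_one (hp : p ≠ 0) : ‖(1 - p : ℝ)‖ < 1 := by
  have : (0 : ℝ) < p := unitInterval.pos_iff_ne_zero.2 hp
  rw [Real.norm_of_nonneg (sub_nonneg.2 p.2.2)]
  linarith

lemma memLp_two_cast_geometricMeasure (hp : p ≠ 0) :
    MemLp (fun n : ℕ ↦ (n : ℝ)) 2 (geometricMeasure p) := by
  rw [memLp_two_iff_integrable_sq .of_discrete, integrable_geometricMeasure_iff hp]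
  convert! ((hasSum_cast_sq_mul_geometric (norm_one_sub_coe_lt_one hp)).mul_right (p : ℝ)).summable
    using 2 with n
  rw [Real.norm_of_nonneg (by positivity)]
  ring

lemma integral_cast_geometricMeasure (hp : p ≠ 0) :
    ∫ n : ℕ, (n : ℝ) ∂geometricMeasure p = 1 / p - 1 := by
  have hp' : (p : ℝ) ≠ 0 := unitInterval.coe_ne_zero.2 hp
  have h := (hasSum_cast_mul_geometric (norm_one_sub_coe_lt_one hp)).mul_right (p : ℝ)
  rw [integral_geometricMeasure hp]
  convert! h.tsum_eq using 1
  · exact tsum_congr fun n ↦ by rw [smul_eq_mul]; ring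
  · rw [sub_sub_cancel]
    field_simp

lemma integral_cast_sq_geometricMeasure (hp : p ≠ 0) :
    ∫ n : ℕ, (n : ℝ) ^ 2 ∂geometricMeasure p = 2 / (p : ℝ) ^ 2 - 3 / p + 1 := by
  have hp' : (p : ℝ) ≠ 0 := unitInterval.coe_ne_zero.2 hp
  have h := (hasSum_cast_sq_mul_geometric (norm_one_sub_coe_lt_one hp)).mul_right (p : ℝ)
  rw [integral_geometricMeasure hp]
  convert! h.tsum_eq using 1
  · exact tsum_congr fun n ↦ by rw [smul_eq_mul]; ring
  · rw [sub_sub_cancel]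
    field_simp

lemma variance_cast_geometricMeasure (hp : p ≠ 0) :
    Var[fun n : ℕ ↦ (n : ℝ); geometricMeasure p] = (1 - p) / (p : ℝ) ^ 2 := by
  have hp' : (p : ℝ) ≠ 0 := unitInterval.coe_ne_zero.2 hp
  rw [variance_eq_sub (memLp_two_cast_geometricMeasure hp)]
  simp only [Pi.pow_apply]
  rw [integral_cast_sq_geometricMeasure hp, integral_cast_geometricMeasure hp]
  field_simp
  ring

end Geometric

section Law

variable {Ω β : Type*} [MeasurableSpace Ω] [MeasurableSpace β] {μ : Measure Ω}
  {p : unitInterval}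

lemma hasLaw_and_indepFun_of_map_prodMk_eq_prod {γ : Type*} [MeasurableSpace γ] {ν : Measure γ}
    [IsProbabilityMeasure μ] [SFinite ν] {X : Ω → β} {Y : Ω → γ}
    (hX : Measurable X) (hY : Measurable Y)
    (h : μ.map (fun ω ↦ (X ω, Y ω)) = (μ.map X).prod ν) : HasLaw Y ν μ ∧ IndepFun X Y μ := by
  have := Measure.isProbabilityMeasure_map (μ := μ) hX.aemeasurable
  have hlaw : μ.map Y = ν := by
    rw [← Measure.snd_map_prodMk hX, h, Measure.snd_prod]
  refine ⟨⟨hY.aemeasurable, hlaw⟩, ?_⟩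
  rw [indepFun_iff_map_prod_eq_prod_map_map hX.aemeasurable hY.aemeasurable, h, hlaw]

lemma hasLaw_geometricMeasure_and_indepFun [Countable β] [MeasurableSingletonClass β]
    [IsProbabilityMeasure μ] {X : Ω → β} {Y : Ω → ℕ} (hX : Measurable X) (hY : Measurable Y)
    (hp : p ≠ 0) (h : ∀ b k, μ.real {ω | X ω = b ∧ k ≤ Y ω} = μ.real {ω | X ω = b} * (1 - p) ^ k) :
    HasLaw Y (geometricMeasure p) μ ∧ IndepFun X Y μ := by
  refine hasLaw_and_indepFun_of_map_prodMk_eq_prod hX hY (Measure.ext_of_singleton fun ⟨b, k⟩ ↦ ?_)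
  have hsub : {ω | X ω = b ∧ k + 1 ≤ Y ω} ⊆ {ω | X ω = b ∧ k ≤ Y ω} :=
    fun ω hω ↦ ⟨hω.1, Nat.le_of_succ_le hω.2⟩
  have hmeas : MeasurableSet {ω | X ω = b ∧ k + 1 ≤ Y ω} :=
    (hX (measurableSet_singleton b)).inter (hY (measurableSet_Ici (a := k + 1)))
  have hdiff : (fun ω ↦ (X ω, Y ω)) ⁻¹' {(b, k)} =
      {ω | X ω = b ∧ k ≤ Y ω} \ {ω | X ω = b ∧ k + 1 ≤ Y ω} := by
    ext ω
    simp only [Set.mem_preimage, Set.mem_singleton_iff, Prod.mk.injEq, Set.mem_sdiff,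
      Set.mem_ofPred_eq]
    grind
  have hreal : (μ.map fun ω ↦ (X ω, Y ω)).real {(b, k)} =
      ((μ.map X).prod (geometricMeasure p)).real {(b, k)} := by
    rw [map_measureReal_apply (hX.prodMk hY) (measurableSet_singleton _), hdiff,
      measureReal_sdiff hsub hmeas, h, h, ← Set.singleton_prod_singleton, measureReal_prod_prod,
      geometricMeasure_real_singleton hp, map_measureReal_apply hX (measurableSet_singleton b)]
    simp only [Set.preimage, Set.mem_singleton_iff]
    ring
  have := Measure.isProbabilityMeasure_map (μ := μ) (hX.prodMk hY).aemeasurable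
  have := Measure.isProbabilityMeasure_map (μ := μ) hX.aemeasurable
  rwa [measureReal_eq_measureReal_iff] at hreal

end Law

lemma measureReal_inter_eq_mul_of_forall_fiber {Ω β : Type*} [MeasurableSpace Ω] {μ : Measure Ω}
    [IsFiniteMeasure μ] [Finite β] {f : Ω → β} (hf : ∀ b, MeasurableSet (f ⁻¹' {b}))
    {A C : Set Ω} {c : ℝ}
    (h : ∀ b, μ.real (f ⁻¹' {b} ∩ A ∩ C) = μ.real (f ⁻¹' {b} ∩ A) * c) :
    μ.real (A ∩ C) = μ.real A * c := by
  have := Fintype.ofFinite β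
  have hsum (D : Set Ω) : μ.real D = ∑ b, μ.real (f ⁻¹' {b} ∩ D) := by
    have := sum_measureReal_preimage_singleton (μ := μ.restrict D) univ fun b _ ↦ hf b
    simpa [measureReal_restrict_apply (hf _)] using this.symm
  rw [hsum A, hsum (A ∩ C), sum_mul]
  simp only [← Set.inter_assoc, h]

section Indep

variable {Ω α : Type*} [MeasurableSpace Ω] [MeasurableSpace α] {μ : Measure Ω}

lemma measureReal_inter_forall_mem {ι : Type*} {X : ι → Ω → α} (hX : iIndepFun X μ)
    (hXm : ∀ i, Measurable (X i)) {S : Set ι} {t : Finset ι} (hSt : Disjoint S t) {A : Set Ω}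
    (hA : MeasurableSet[⨆ i ∈ S, MeasurableSpace.comap (X i) inferInstance] A)
    {s : Set α} (hs : MeasurableSet s) :
    μ.real (A ∩ {ω | ∀ i ∈ t, X i ω ∈ s}) = μ.real A * ∏ i ∈ t, μ.real (X i ⁻¹' s) := by
  have hset : {ω | ∀ i ∈ t, X i ω ∈ s} = ⋂ i ∈ t, X i ⁻¹' s := by
    ext ω
    simp
  have hC : MeasurableSet[⨆ i ∈ (t : Set ι), MeasurableSpace.comap (X i) inferInstance]
      (⋂ i ∈ t, X i ⁻¹' s) :=
    t.measurableSet_biInter fun i hi ↦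
      le_iSup₂ (f := fun i (_ : i ∈ (t : Set ι)) ↦ MeasurableSpace.comap (X i) inferInstance) i hi _
        ⟨s, hs, rfl⟩
  have hind := indep_iSup_of_disjoint (fun i ↦ (hXm i).comap_le) hX hSt
  rw [hset, measureReal_def, (Indep_iff _ _ _).1 hind A _ hA hC,
    hX.measure_inter_preimage_eq_mul t fun _ _ ↦ hs, ENNReal.toReal_mul, ENNReal.toReal_prod]
  rfl

lemma ae_surjective [Countable α] [MeasurableSingletonClass α] {X : ℕ → Ω → α}
    (hX : iIndepFun X μ) (hXm : ∀ i, Measurable (X i))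
    (hsum : ∀ y, ∑' i, μ (X i ⁻¹' {y}) = ∞) : ∀ᵐ ω ∂μ, Surjective fun i ↦ X i ω := by
  have := hX.isProbabilityMeasure
  refine ae_all_iff.2 fun y ↦ ?_
  have hmeas (i : ℕ) : MeasurableSet (X i ⁻¹' {y}) := hXm i (measurableSet_singleton y)
  have hindep : iIndepSet (fun i ↦ X i ⁻¹' {y}) μ :=
    (iIndepSet_iff_meas_biInter hmeas).2 fun t ↦
      hX.measure_inter_preimage_eq_mul t fun _ _ ↦ measurableSet_singleton y
  have hlimsup := measure_limsup_eq_one hmeas hindep (hsum y)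
  rw [← mem_ae_iff_prob_eq_one (MeasurableSet.measurableSet_limsup hmeas)] at hlimsup
  filter_upwards [hlimsup] with ω hω
  exact (Filter.mem_limsup_iff_frequently_mem.1 hω).exists

lemma ae_surjective_of_map_eq_uniformOn [Finite α] [MeasurableSingletonClass α]
    {X : ℕ → Ω → α} (hX : iIndepFun X μ) (hXm : ∀ i, Measurable (X i))
    (hunif : ∀ i, μ.map (X i) = uniformOn Set.univ) : ∀ᵐ ω ∂μ, Surjective fun i ↦ X i ω := by
  have := Fintype.ofFinite α
  refine ae_surjective hX hXm fun y ↦ ?_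
  have hprob (i : ℕ) : μ (X i ⁻¹' {y}) = (Fintype.card α : ℝ≥0∞)⁻¹ := by
    rw [← Measure.map_apply (hXm i) (measurableSet_singleton y), hunif, uniformOn_univ,
      Measure.count_singleton, one_div]
  simp only [hprob]
  exact ENNReal.tsum_const_eq_top_of_ne_zero (by simp)

end Indep

section Measurability

variable {Ω α : Type*} {mΩ : MeasurableSpace Ω} [Countable α] [DecidableEq α] [MeasurableSpace α]
  [MeasurableSingletonClass α] {X : ℕ → Ω → α}

lemma measurableSet_seen {n : ℕ} (hXm : ∀ i < n, Measurable (X i)) (P : Finset α → Prop) :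
    MeasurableSet {ω | P (seen (X · ω) n)} := by
  induction n generalizing P with
  | zero => exact MeasurableSet.const (P ∅)
  | succ n ih =>
    have hunion : {ω | P (seen (X · ω) (n + 1))} =
        ⋃ y, X n ⁻¹' {y} ∩ {ω | P (insert y (seen (X · ω) n))} := by
      ext ω
      simp [seen_succ]
    rw [hunion]
    exact MeasurableSet.iUnion fun y ↦ (hXm n n.lt_succ_self (measurableSet_singleton y)).inter <|
      ih (fun i hi ↦ hXm i (hi.trans n.lt_succ_self)) fun s ↦ P (insert y s)

lemma measurable_collectionTime (hXm : ∀ i, Measurable (X i)) (m : ℕ) :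
    Measurable fun ω ↦ collectionTime (X · ω) m :=
  measurable_sInf_setOf fun _ ↦ measurableSet_seen (fun i _ ↦ hXm i) fun s ↦ m ≤ #s

lemma measurable_repeats (hXm : ∀ i, Measurable (X i)) (m : ℕ) :
    Measurable fun ω ↦ repeats (X · ω) m :=
  ((measurable_collectionTime hXm (m + 1)).sub (measurable_collectionTime hXm m)).sub_const 1

lemma measurableSet_seen_eq_and_collectionTime_eq {a : ℕ} (hXm : ∀ i < a, Measurable (X i))
    (s : Finset α) :
    MeasurableSet {ω | seen (X · ω) a = s ∧ collectionTime (X · ω) #s = a} := by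
  have hset : {ω | seen (X · ω) a = s ∧ collectionTime (X · ω) #s = a} =
      {ω | seen (X · ω) a = s} ∩ ⋂ i ∈ range a, {ω | #(seen (X · ω) i) < #s} := by
    ext ω
    simp only [Set.mem_inter_iff, Set.mem_iInter, Set.mem_ofPred_eq, mem_range]
    exact and_congr_right fun h ↦ collectionTime_eq_iff_of_card_seen_eq (by rw [h])
  rw [hset]
  exact (measurableSet_seen hXm (· = s)).inter <| (range a).measurableSet_biInter fun i hi ↦
    measurableSet_seen (fun j hj ↦ hXm j (hj.trans (mem_range.1 hi))) (#· < #s)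

end Measurability

/-- The probability that a draw is new when `m` of the `B` coupons have been seen, as the success
probability of a geometric law; clamping makes it a point of the unit interval for all `m`. -/
noncomputable def newCouponProb (B m : ℕ) : unitInterval :=
  Set.projIcc 0 1 zero_le_one (1 - m / B : ℝ)

lemma coe_newCouponProb {B m : ℕ} (h : m ≤ B) : (newCouponProb B m : ℝ) = 1 - m / B := by
  have hle : (m / B : ℝ) ≤ 1 := div_le_one_of_le₀ (by exact_mod_cast h) B.cast_nonneg
  have hnonneg : (0 : ℝ) ≤ m / B := by positivity
  rw [newCouponProb, Set.projIcc_of_mem _ ⟨sub_nonneg.2 hle, sub_le_self 1 hnonneg⟩]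

lemma newCouponProb_ne_zero {B m : ℕ} (h : m < B) : newCouponProb B m ≠ 0 := by
  rw [← unitInterval.coe_ne_zero, coe_newCouponProb h.le, sub_ne_zero]
  exact ((div_lt_one (by exact_mod_cast m.zero_le.trans_lt h)).2 (by exact_mod_cast h)).ne'

section Uniform

variable {Ω α : Type*} [MeasurableSpace Ω] [Fintype α] [MeasurableSpace α]
  [MeasurableSingletonClass α] {μ : Measure Ω} {X : ℕ → Ω → α} (hX : iIndepFun X μ)
  (hXm : ∀ i, Measurable (X i)) (hunif : ∀ i, μ.map (X i) = uniformOn Set.univ)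

include hXm hunif in
lemma measureReal_preimage (s : Finset α) (i : ℕ) :
    μ.real (X i ⁻¹' s) = #s / Fintype.card α := by
  rw [← map_measureReal_apply (hXm i) s.measurableSet, hunif, measureReal_def, uniformOn_univ,
    Measure.count_apply_finset, ENNReal.toReal_div, ENNReal.toReal_natCast, ENNReal.toReal_natCast]

variable [DecidableEq α]

include hX hXm hunif

lemma ae_exists_le_card_seen {m : ℕ} (hm : m ≤ Fintype.card α) :
    ∀ᵐ ω ∂μ, ∃ n, m ≤ #(seen (X · ω) n) := by
  filter_upwards [ae_surjective_of_map_eq_uniformOn hX hXm hunif] with ω hω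
  exact exists_le_card_seen hω hm

lemma measureReal_seen_eq_and_collectionTime_eq_inter (s : Finset α) (a k : ℕ) :
    μ.real ({ω | seen (X · ω) a = s ∧ collectionTime (X · ω) #s = a} ∩
        {ω | ∀ i ∈ Ico a (a + k), X i ω ∈ s}) =
      μ.real {ω | seen (X · ω) a = s ∧ collectionTime (X · ω) #s = a} *
        (#s / Fintype.card α : ℝ) ^ k := by
  have hpast (i : ℕ) (hi : i < a) :
      Measurable[⨆ i ∈ Set.Iio a, MeasurableSpace.comap (X i) inferInstance] (X i) :=
    (comap_measurable (X i)).mono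
      (le_iSup₂ (f := fun i (_ : i ∈ Set.Iio a) ↦ MeasurableSpace.comap (X i) inferInstance) i hi)
      le_rfl
  have hdisj : Disjoint (Set.Iio a) (Ico a (a + k) : Finset ℕ) :=
    Set.disjoint_left.2 fun i hi hi' ↦ (mem_Ico.1 hi').1.not_gt hi
  refine (measureReal_inter_forall_mem hX hXm hdisj
    (measurableSet_seen_eq_and_collectionTime_eq hpast s) s.measurableSet).trans ?_
  simp only [measureReal_preimage hXm hunif, prod_const, Nat.card_Ico, Nat.add_sub_cancel_left]

lemma measureReal_collectionTime_eq_and_le_repeats {m : ℕ} (hm : m < Fintype.card α) (a k : ℕ) :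
    μ.real {ω | collectionTime (X · ω) m = a ∧ k ≤ repeats (X · ω) m} =
      μ.real {ω | collectionTime (X · ω) m = a} * (m / Fintype.card α : ℝ) ^ k := by
  have := hX.isProbabilityMeasure
  have hfin := ae_exists_le_card_seen hX hXm hunif (Nat.succ_le_of_lt hm)
  refine measureReal_inter_eq_mul_of_forall_fiber (f := fun ω ↦ seen (X · ω) a)
    (A := {ω | collectionTime (X · ω) m = a}) (C := {ω | k ≤ repeats (X · ω) m})
    (fun s ↦ measurableSet_seen (fun i _ ↦ hXm i) (· = s)) fun s ↦ ?_
  rcases eq_or_ne #s m with rfl | hs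
  · refine Eq.trans (measureReal_congr ?_)
      (measureReal_seen_eq_and_collectionTime_eq_inter hX hXm hunif s a k)
    filter_upwards [hfin] with ω hω
    refine propext (and_congr_right fun ⟨hseen, hT⟩ ↦ ?_)
    simp only [Set.mem_preimage, Set.mem_singleton_iff, Set.mem_ofPred_eq] at hseen hT ⊢
    exact (le_repeats_iff hω k).trans (by rw [hT, hseen])
  · have hnull : μ ((fun ω ↦ seen (X · ω) a) ⁻¹' {s} ∩ {ω | collectionTime (X · ω) m = a}) = 0 := by
      refine measure_eq_zero_iff_ae_notMem.2 ?_
      filter_upwards [hfin] with ω hω ⟨hseen, hT⟩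
      have hcard := card_seen_collectionTime (hω.imp fun _ hn ↦ m.le_succ.trans hn)
      simp only [Set.mem_preimage, Set.mem_singleton_iff, Set.mem_ofPred_eq] at hseen hT
      rw [hT, hseen] at hcard
      exact hs hcard
    rw [measureReal_def, measureReal_def, measure_mono_null Set.inter_subset_left hnull, hnull,
      ENNReal.toReal_zero, zero_mul]

lemma hasLaw_repeats_and_indepFun_collectionTime {m : ℕ} (hm : m < Fintype.card α) :
    HasLaw (fun ω ↦ repeats (X · ω) m) (geometricMeasure (newCouponProb (Fintype.card α) m)) μ ∧
      IndepFun (fun ω ↦ collectionTime (X · ω) m) (fun ω ↦ repeats (X · ω) m) μ := by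
  have := hX.isProbabilityMeasure
  refine hasLaw_geometricMeasure_and_indepFun (measurable_collectionTime hXm m)
    (measurable_repeats hXm m) (newCouponProb_ne_zero hm) fun a k ↦ ?_
  rw [coe_newCouponProb hm.le, sub_sub_cancel]
  exact measureReal_collectionTime_eq_and_le_repeats hX hXm hunif hm a k

lemma measurePreserving_repeats {m : ℕ} (hm : m < Fintype.card α) :
    MeasurePreserving (fun ω ↦ repeats (X · ω) m) μ
      (geometricMeasure (newCouponProb (Fintype.card α) m)) :=
  (hasLaw_repeats_and_indepFun_collectionTime hX hXm hunif hm).1.measurePreserving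
    (measurable_repeats hXm m)

lemma memLp_two_repeats {m : ℕ} (hm : m < Fintype.card α) :
    MemLp (fun ω ↦ (repeats (X · ω) m : ℝ)) 2 μ :=
  (memLp_two_cast_geometricMeasure (newCouponProb_ne_zero hm)).comp_measurePreserving
    (measurePreserving_repeats hX hXm hunif hm)

lemma variance_repeats {m : ℕ} (hm : m < Fintype.card α) :
    Var[fun ω ↦ (repeats (X · ω) m : ℝ); μ] =
      Fintype.card α * m / (Fintype.card α - m : ℝ) ^ 2 := by
  have hcard : (Fintype.card α : ℝ) ≠ 0 := by exact_mod_cast (m.zero_le.trans_lt hm).ne'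
  have hsub : (Fintype.card α - m : ℝ) ≠ 0 := sub_ne_zero.2 (by exact_mod_cast hm.ne')
  rw [(measurePreserving_repeats hX hXm hunif hm).variance_fun_comp (f := fun n : ℕ ↦ (n : ℝ))
      (by fun_prop), variance_cast_geometricMeasure (newCouponProb_ne_zero hm),
    coe_newCouponProb hm.le, sub_sub_cancel, one_sub_div hcard]
  field_simp

lemma cast_collectionTime_succ_ae_eq {m : ℕ} (hm : m < Fintype.card α) :
    (fun ω ↦ (collectionTime (X · ω) (m + 1) : ℝ)) =ᵐ[μ]
      fun ω ↦ (collectionTime (X · ω) m : ℝ) + repeats (X · ω) m + 1 := by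
  filter_upwards [ae_exists_le_card_seen hX hXm hunif (Nat.succ_le_of_lt hm)] with ω hω
  exact_mod_cast collectionTime_succ hω

lemma memLp_two_collectionTime {m : ℕ} (hm : m ≤ Fintype.card α) :
    MemLp (fun ω ↦ (collectionTime (X · ω) m : ℝ)) 2 μ := by
  have := hX.isProbabilityMeasure
  induction m with
  | zero => simp [collectionTime_zero]
  | succ m ih =>
    exact (((ih (m.le_succ.trans hm)).add (memLp_two_repeats hX hXm hunif hm)).add
      (memLp_const 1)).ae_eq (cast_collectionTime_succ_ae_eq hX hXm hunif hm).symm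

lemma variance_collectionTime {m : ℕ} (hm : m ≤ Fintype.card α) :
    Var[fun ω ↦ (collectionTime (X · ω) m : ℝ); μ] =
      ∑ d ∈ range m, Fintype.card α * d / (Fintype.card α - d : ℝ) ^ 2 := by
  have := hX.isProbabilityMeasure
  induction m with
  | zero =>
    simp only [collectionTime_zero, Nat.cast_zero, range_zero, sum_empty]
    exact variance_zero μ
  | succ m ih =>
    have hT := memLp_two_collectionTime hX hXm hunif (m.le_succ.trans hm)
    have hR := memLp_two_repeats hX hXm hunif hm
    have hindep : IndepFun (fun ω ↦ (collectionTime (X · ω) m : ℝ))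
        (fun ω ↦ (repeats (X · ω) m : ℝ)) μ :=
      (hasLaw_repeats_and_indepFun_collectionTime hX hXm hunif hm).2.comp
        measurable_from_nat measurable_from_nat
    rw [variance_congr (cast_collectionTime_succ_ae_eq hX hXm hunif hm),
      variance_add_const (hT.1.fun_add hR.1), hindep.variance_fun_add hT hR,
      ih (m.le_succ.trans hm), variance_repeats hX hXm hunif hm, sum_range_succ]

end Uniform

lemma sum_Ioc_one_div_eq_H_sub {K B : ℕ} (h : K ≤ B) :
    ∑ i ∈ Ioc K B, 1 / (i : ℝ) = H B - H K :=
  eq_sub_of_add_eq' (sum_Ioc_consecutive _ K.zero_le h)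

lemma sum_Ioc_one_div_sq_eq_H2_sub {K B : ℕ} (h : K ≤ B) :
    ∑ i ∈ Ioc K B, 1 / (i : ℝ) ^ 2 = H2 B - H2 K :=
  eq_sub_of_add_eq' (sum_Ioc_consecutive _ K.zero_le h)

lemma sum_range_mul_div_sub_sq {K B : ℕ} (h : K ≤ B) :
    ∑ d ∈ range (B - K), (B * d / (B - d : ℝ) ^ 2) =
      (B : ℝ) ^ 2 * (H2 B - H2 K) - B * (H B - H K) := by
  rw [← sum_Ioc_one_div_eq_H_sub h, ← sum_Ioc_one_div_sq_eq_H2_sub h, mul_sum, mul_sum,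
    ← sum_sub_distrib]
  refine sum_nbij' (B - ·) (B - ·) ?_ ?_ ?_ ?_ fun d hd ↦ ?_
  iterate 4 · simp only [mem_range, mem_Ioc]; omega
  have hd' : d < B := (mem_range.1 hd).trans_le (B.sub_le K)
  have hsub : (B - d : ℝ) ≠ 0 := sub_ne_zero.2 (by exact_mod_cast hd'.ne')
  rw [Nat.cast_sub hd'.le]
  field_simp
  ring

lemma uniformFin_eq_uniformOn (B : ℕ) : uniformFin B = uniformOn Set.univ := by
  ext s -
  rw [uniformOn_univ, Fintype.card_fin, ENNReal.div_eq_inv_mul]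
  rfl

end CouponCollector

theorem coupon_collector_replacement_variance_general {Ω α : Type*} [MeasurableSpace Ω]
    [Fintype α] [DecidableEq α] [MeasurableSpace α] [MeasurableSingletonClass α]
    {μ : Measure Ω} {X : ℕ → Ω → α} {K : ℕ} (hK : K ≤ Fintype.card α)
    (hX : iIndepFun X μ) (hXm : ∀ i, Measurable (X i))
    (hunif : ∀ i, μ.map (X i) = uniformOn Set.univ) :
    Var[fun ω ↦ (CouponCollector.collectionTime (X · ω) (Fintype.card α - K) : ℝ); μ] =
      (Fintype.card α : ℝ) ^ 2 * (H2 (Fintype.card α) - H2 K) -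
        Fintype.card α * (H (Fintype.card α) - H K) := by
  rw [CouponCollector.variance_collectionTime hX hXm hunif (Nat.sub_le _ _),
    CouponCollector.sum_range_mul_div_sub_sq hK]

/-- **Variance of the coupon collector with replacement.** If `μ` is a probability measure on
`ℕ → Fin B` under which the draws are independent and uniform on the `B` coupons, and
`1 ≤ K ≤ B`, then `Var[T_{B,K}] = B² * (H₂(B) - H₂(K)) - B * (H(B) - H(K))`. -/
theorem coupon_collector_replacement_variance
    (B K : ℕ) (hK : 1 ≤ K) (hKB : K ≤ B)
    (μ : Measure (ℕ → Fin B)) [IsProbabilityMeasure μ]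
    (hIndep : iIndepFun (fun i (ω : ℕ → Fin B) => ω i) μ)
    (hUnif : ∀ i : ℕ, μ.map (fun ω => ω i) = uniformFin B) :
    variance (fun ω => (collectTime B K ω : ℝ)) μ
      = (B : ℝ) ^ 2 * (H2 B - H2 K) - B * (H B - H K) := by
  have h := coupon_collector_replacement_variance_general (hKB.trans_eq (Fintype.card_fin B).symm)
    hIndep (fun i ↦ measurable_pi_apply i)
    fun i ↦ (hUnif i).trans (CouponCollector.uniformFin_eq_uniformOn B)
  rwa [Fintype.card_fin] at h
end

section
/- (Newman–Shepp double dixie cup asymptotics.) Fix a natural number F ≥ 1. In the coupon collector process with B distinct coupons drawn independently and uniformly at random, let T_{B}^{(F)} be the first time n at which every coupon has appeared at least F times among the first n draws. Then as B → ∞, (E[T_B^{(F)}] − B·ln B)/(B·ln ln B) converges to F − 1; equivalently, E[T_B^{(F)}] = B·ln B + (F−1)·B·ln ln B + o(B·ln ln B). -/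
open MeasureTheory ProbabilityTheory Filter
open scoped ENNReal

/-- The double dixie cup stopping time `T_B^{(F)}`: the least `n` such that every one of the
`B` coupons has appeared at least `F` times among the first `n` draws. -/
noncomputable def coverTimeMulti (B F : ℕ) (ω : ℕ → Fin B) : ℕ :=
  sInf {n : ℕ | ∀ c : Fin B, F ≤ ((Finset.range n).filter fun i => ω i = c).card}

open Finset Set
open scoped NNReal Nat Topology

/-!
Instead of counting draws, let the coupons arrive at the times of a Poisson process of rate `B`.
The numbers of coupons of each type seen by time `t` are then *independent* Poisson variables of
mean `t`, so the collection is completed at the maximum of `B` independent Erlang(`F`) times,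
while each draw takes time `1 / B` on average. Hence, exactly,
`E[T] = B * ∫ t in (0, ∞), (1 - (1 - q t) ^ B)` with `q t = P(Poisson(t) < F)`. The integrand drops
from `1` to `0` where `B * q t` crosses `1`; as `q t` is of order `exp (-t) * t ^ (F - 1)`, this
happens within `o(log log B)` of `t = log B + (F - 1) * log log B`.
-/

namespace DixieCup

section Multinomial

variable {ι : Type*} [Fintype ι]

lemma sum_prod_filter_card_eq [DecidableEq ι] {R : Type*} [CommSemiring R] (a : ι → R) (n : ℕ)
    (m : ι → ℕ) :
    ∑ y : Fin n → ι with (fun c ↦ #{i | y i = c}) = m, ∏ i, a (y i) =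
      if ∑ c, m c = n then Nat.multinomial univ m * ∏ c, a c ^ m c else 0 := by
  let s : ι →₀ ℕ := Finsupp.equivFunOnFinite.symm m
  have count_eq_iff (y : Fin n → ι) :
      ∑ i, Finsupp.single (y i) 1 = s ↔ (fun c ↦ #{i | y i = c}) = m := by
    simp [DFunLike.ext_iff, funext_iff, s, Finsupp.finsetSum_apply, Finsupp.single_apply]
  have expand : (∑ c, a c • MvPolynomial.X c : MvPolynomial ι R) ^ n =
      ∑ y : Fin n → ι, MvPolynomial.monomial (∑ i, Finsupp.single (y i) 1) (∏ i, a (y i)) := by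
    simp only [MvPolynomial.monomial_sum_prod, ← MvPolynomial.C_mul_X_eq_monomial,
      ← MvPolynomial.smul_eq_C_mul]
    rw [← Fin.prod_const, prod_univ_sum, Fintype.piFinset_univ]
  have coeff_eq := MvPolynomial.coeff_linearCombination_X_pow_of_fintype a s n
  rw [expand, MvPolynomial.coeff_sum] at coeff_eq
  simp only [MvPolynomial.coeff_monomial, count_eq_iff] at coeff_eq
  rw [sum_filter, coeff_eq, Finsupp.sum_fintype _ _ (fun _ ↦ rfl),
    Finsupp.prod_fintype _ _ (by simp), Finsupp.multinomial_eq_of_support_subset (subset_univ _)]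
  rfl

lemma exp_neg_mul_pow_div_factorial_mul_multinomial (r : ℝ) {p : ι → ℝ} (hp : ∑ c, p c = 1)
    (m : ι → ℕ) :
    Real.exp (-r) * r ^ (∑ c, m c) / (∑ c, m c)! *
        (Nat.multinomial univ m * ∏ c, p c ^ m c) =
      ∏ c, (Real.exp (-(r * p c)) * (r * p c) ^ m c / (m c)!) := by
  have exp_eq : Real.exp (-r) = ∏ c, Real.exp (-(r * p c)) := by
    rw [← Real.exp_sum, sum_neg_distrib, ← mul_sum, hp, mul_one]
  have factorial_eq : ((∑ c, m c)! : ℝ) = (∏ c, ((m c)! : ℝ)) * Nat.multinomial univ m := by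
    exact_mod_cast (Nat.multinomial_spec univ m).symm
  have factorial_ne : ((∑ c, m c)! : ℝ) ≠ 0 := by positivity
  rw [factorial_eq] at factorial_ne ⊢
  obtain ⟨prod_ne, multinomial_ne⟩ := mul_ne_zero_iff.1 factorial_ne
  simp only [prod_div_distrib, prod_mul_distrib, mul_pow, prod_pow_eq_pow_sum, ← exp_eq]
  field_simp

end Multinomial

section Counting

variable {ι : Type*} [DecidableEq ι]

/-- The number of coupons `c` among the first `n` draws of `x`. -/
def drawCount (n : ℕ) (x : ℕ → ι) (c : ι) : ℕ := #{i ∈ range n | x i = c}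

lemma drawCount_eq_card_fin (n : ℕ) (x : ℕ → ι) (c : ι) :
    drawCount n x c = #{i : Fin n | x i = c} := by
  simp only [drawCount, card_filter, sum_range]

lemma drawCount_mono (x : ℕ → ι) (c : ι) : Monotone (drawCount · x c) := fun _ _ h ↦
  card_le_card (filter_subset_filter _ (range_mono h))

/-- The event that some coupon has been drawn fewer than `F` times in the first `n` draws. -/
def incomplete (F n : ℕ) : Set (ℕ → ι) := {x | ∃ c, drawCount n x c < F}

lemma incomplete_anti (F : ℕ) : Antitone (incomplete F : ℕ → Set (ℕ → ι)) :=
  fun _ _ h x ⟨c, hc⟩ ↦ ⟨c, (drawCount_mono x c h).trans_lt hc⟩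

end Counting

section Poissonization

variable {ι : Type*} [MeasurableSpace ι] {μ : Measure (ℕ → ι)} {ν : Measure ι}

lemma map_take_eq_pi [IsProbabilityMeasure μ]
    (hI : iIndepFun (fun i (x : ℕ → ι) ↦ x i) μ) (hX : ∀ i, μ.map (fun x ↦ x i) = ν) (n : ℕ) :
    μ.map (fun x (i : Fin n) ↦ x i) = Measure.pi fun _ ↦ ν := by
  have := (hI.precomp (Fin.val_injective (n := n))).map_fun_eq_pi_map
    (fun i ↦ (measurable_pi_apply _).aemeasurable)
  simpa only [hX] using this

variable [DecidableEq ι] [MeasurableSingletonClass ι]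

lemma measurable_drawCount (n : ℕ) : Measurable (drawCount n : (ℕ → ι) → ι → ℕ) := by
  refine measurable_pi_lambda _ fun c ↦ ?_
  have measurable_eq (i : ℕ) : MeasurableSet ((fun x : ℕ → ι ↦ x i) ⁻¹' {c}) :=
    measurable_pi_apply i (measurableSet_singleton c)
  simp only [drawCount, card_filter]
  exact Finset.measurable_sum _ fun i _ ↦
    Measurable.ite (measurable_eq i) measurable_const measurable_const

lemma measurableSet_incomplete [Finite ι] (F n : ℕ) :
    MeasurableSet (incomplete F n : Set (ℕ → ι)) :=
  measurable_drawCount n (MeasurableSet.of_discrete (s := {m : ι → ℕ | ∃ c, m c < F}))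

variable [Fintype ι]

lemma map_drawCount_singleton [IsProbabilityMeasure μ]
    (hI : iIndepFun (fun i (x : ℕ → ι) ↦ x i) μ) (hX : ∀ i, μ.map (fun x ↦ x i) = ν)
    (n : ℕ) (m : ι → ℕ) :
    μ.map (drawCount n) {m} =
      if ∑ c, m c = n then Nat.multinomial univ m * ∏ c, ν {c} ^ m c else 0 := by
  have : IsProbabilityMeasure ν :=
    hX 0 ▸ Measure.isProbabilityMeasure_map (measurable_pi_apply 0).aemeasurable
  let s : Finset (Fin n → ι) := {y | (fun c ↦ #{i | y i = c}) = m}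
  have preimage_eq : drawCount n ⁻¹' {m} = (fun (x : ℕ → ι) (i : Fin n) ↦ x i) ⁻¹' s := by
    ext x
    simp [s, funext_iff, drawCount_eq_card_fin]
  rw [Measure.map_apply (measurable_drawCount n) (measurableSet_singleton m), preimage_eq,
    ← Measure.map_apply (by fun_prop) s.measurableSet, map_take_eq_pi hI hX,
    ← sum_measure_singleton, ← sum_prod_filter_card_eq]
  simp only [Measure.pi_singleton, s]

lemma bind_map_drawCount_poissonMeasure [IsProbabilityMeasure μ]
    (hI : iIndepFun (fun i (x : ℕ → ι) ↦ x i) μ) (hX : ∀ i, μ.map (fun x ↦ x i) = ν)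
    (r : ℝ≥0) :
    (poissonMeasure r).bind (fun n ↦ μ.map (drawCount n)) =
      Measure.pi fun c ↦ poissonMeasure (r * (ν {c}).toNNReal) := by
  have : IsProbabilityMeasure ν :=
    hX 0 ▸ Measure.isProbabilityMeasure_map (measurable_pi_apply 0).aemeasurable
  have rate_eq (c : ι) : ((ν {c}).toNNReal : ℝ) = ν.real {c} := rfl
  have sum_real : ∑ c, ν.real {c} = 1 := by simp
  refine Measure.ext_of_singleton fun m ↦ ?_
  have bind_eq : (poissonMeasure r).bind (fun n ↦ μ.map (drawCount n)) {m} =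
      Nat.multinomial univ m * (∏ c, ν {c} ^ m c) * poissonMeasure r {∑ c, m c} := by
    rw [Measure.bind_apply (measurableSet_singleton m) Measurable.of_discrete.aemeasurable,
      lintegral_countable', tsum_eq_single (∑ c, m c)]
    · simp [map_drawCount_singleton hI hX]
    · intro n hn
      simp [map_drawCount_singleton hI hX, hn.symm]
  have product_eq := exp_neg_mul_pow_div_factorial_mul_multinomial r sum_real m
  rw [bind_eq, Measure.pi_singleton]
  simp only [poissonMeasure_singleton, NNReal.coe_mul, rate_eq]
  rw [← ENNReal.ofReal_prod_of_nonneg (fun c _ ↦ by positivity), ← product_eq,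
    ENNReal.ofReal_mul (by positivity), ENNReal.ofReal_mul (by positivity),
    ENNReal.ofReal_prod_of_nonneg (fun c _ ↦ by positivity), mul_comm]
  simp [ENNReal.ofReal_pow]

lemma lintegral_incomplete_poissonMeasure [IsProbabilityMeasure μ]
    (hI : iIndepFun (fun i (x : ℕ → ι) ↦ x i) μ) (hX : ∀ i, μ.map (fun x ↦ x i) = ν)
    (F : ℕ) (r : ℝ≥0) :
    ∫⁻ n, μ (incomplete F n) ∂poissonMeasure r =
      1 - ∏ c, poissonMeasure (r * (ν {c}).toNNReal) (Ici F) := by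
  have compl_eq : {m : ι → ℕ | ∃ c, m c < F}ᶜ = univ.pi fun _ ↦ Ici F := by
    ext m
    simp [Pi.le_def]
  calc ∫⁻ n, μ (incomplete F n) ∂poissonMeasure r
      = (poissonMeasure r).bind (fun n ↦ μ.map (drawCount n)) {m | ∃ c, m c < F} := by
        rw [Measure.bind_apply .of_discrete Measurable.of_discrete.aemeasurable]
        simp only [Measure.map_apply (measurable_drawCount _) MeasurableSet.of_discrete]
        rfl
    _ = 1 - ∏ c, poissonMeasure (r * (ν {c}).toNNReal) (Ici F) := by
        rw [bind_map_drawCount_poissonMeasure hI hX, ← Measure.pi_pi, ← compl_eq,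
          ← prob_compl_eq_one_sub .of_discrete, compl_compl]

end Poissonization

lemma mul_poissonMeasure_singleton_eq_gammaPDF {r : ℝ≥0} {t : ℝ} (ht : 0 ≤ t) (n : ℕ) :
    r * poissonMeasure (r * t.toNNReal) {n} = gammaPDF (n + 1) r t := by
  rw [poissonMeasure_singleton, gammaPDF_of_nonneg ht, ← ENNReal.ofReal_coe_nnreal,
    ← ENNReal.ofReal_mul r.coe_nonneg]
  congr 1
  rw [add_sub_cancel_right, Real.rpow_natCast, ← Nat.cast_add_one, Real.rpow_natCast,
    Nat.cast_add_one, Real.Gamma_nat_eq_factorial, NNReal.coe_mul, Real.coe_toNNReal t ht]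
  ring

lemma tsum_eq_lintegral_poissonMeasure {r : ℝ≥0} (hr : 0 < r) (a : ℕ → ℝ≥0∞) :
    ∑' n, a n = r * ∫⁻ t in Ioi (0 : ℝ), ∫⁻ n, a n ∂poissonMeasure (r * t.toNNReal) := by
  have setLIntegral_gammaPDF (n : ℕ) : ∫⁻ t in Ioi 0, gammaPDF (n + 1) r t = 1 := by
    rw [setLIntegral_congr Ioi_ae_eq_Ici, setLIntegral_eq_of_support_subset,
      lintegral_gammaPDF_eq_one (by positivity) (by positivity)]
    exact fun t ht ↦ not_lt.1 fun ht_neg ↦ ht (gammaPDF_of_neg ht_neg)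
  have measurable_gammaPDF (n : ℕ) : Measurable (gammaPDF (n + 1) r) :=
    (measurable_gammaPDFReal _ _).ennreal_ofReal
  calc ∑' n, a n
      = ∑' n, ∫⁻ t in Ioi 0, a n * gammaPDF (n + 1) r t := by
        simp only [lintegral_const_mul _ (measurable_gammaPDF _), setLIntegral_gammaPDF, mul_one]
    _ = ∫⁻ t in Ioi 0, ∑' n, a n * gammaPDF (n + 1) r t :=
        (lintegral_tsum fun n ↦ ((measurable_gammaPDF n).const_mul _).aemeasurable).symm
    _ = ∫⁻ t in Ioi (0 : ℝ), r * ∫⁻ n, a n ∂poissonMeasure (r * t.toNNReal) := by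
        refine setLIntegral_congr_fun measurableSet_Ioi fun t (ht : 0 < t) ↦ ?_
        simp only [lintegral_countable', ← mul_poissonMeasure_singleton_eq_gammaPDF ht.le,
          mul_left_comm _ (r : ℝ≥0∞), ENNReal.tsum_mul_left]
    _ = r * ∫⁻ t in Ioi (0 : ℝ), ∫⁻ n, a n ∂poissonMeasure (r * t.toNNReal) :=
        lintegral_const_mul' _ _ ENNReal.coe_ne_top

/-- The probability that a Poisson variable of mean `t` is less than `F`, equivalently that an
Erlang variable of shape `F` and rate `1` exceeds `t`. -/
noncomputable def poissonLT (F : ℕ) (t : ℝ) : ℝ := Real.exp (-t) * ∑ j ∈ range F, t ^ j / j !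

lemma poissonLT_nonneg (F : ℕ) {t : ℝ} (ht : 0 ≤ t) : 0 ≤ poissonLT F t := by
  unfold poissonLT
  positivity

lemma poissonMeasure_Iio (F : ℕ) (t : ℝ≥0) :
    poissonMeasure t (Set.Iio F) = ENNReal.ofReal (poissonLT F t) := by
  rw [← coe_Iio, Nat.Iio_eq_range, ← sum_measure_singleton, poissonLT, mul_sum,
    ENNReal.ofReal_sum_of_nonneg fun j _ ↦ by positivity]
  simp only [poissonMeasure_singleton, mul_div_assoc]

lemma poissonMeasure_Ici (F : ℕ) (t : ℝ≥0) :
    poissonMeasure t (Set.Ici F) = ENNReal.ofReal (1 - poissonLT F t) := by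
  rw [← Set.compl_Iio, prob_compl_eq_one_sub measurableSet_Iio, poissonMeasure_Iio,
    ENNReal.ofReal_sub _ (poissonLT_nonneg F t.coe_nonneg), ENNReal.ofReal_one]

lemma poissonLT_le_one (F : ℕ) {t : ℝ} (ht : 0 ≤ t) : poissonLT F t ≤ 1 :=
  calc poissonLT F t
      ≤ Real.exp (-t) * Real.exp t := by
        unfold poissonLT
        gcongr
        exact Real.sum_le_exp_of_nonneg ht F
    _ = 1 := by rw [← Real.exp_add, neg_add_cancel, Real.exp_zero]

lemma continuous_poissonLT (F : ℕ) : Continuous (poissonLT F) := by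
  unfold poissonLT
  fun_prop

lemma hasDerivAt_poissonLT (k : ℕ) (t : ℝ) :
    HasDerivAt (poissonLT (k + 1)) (-(Real.exp (-t) * (t ^ k / k !))) t := by
  have hasDerivAt_exp_neg : HasDerivAt (fun s : ℝ ↦ Real.exp (-s)) (-Real.exp (-t)) t := by
    simpa using (hasDerivAt_neg t).exp
  induction k with
  | zero =>
    have poissonLT_one : poissonLT 1 = fun s ↦ Real.exp (-s) := by
      ext s
      simp [poissonLT]
    simpa [poissonLT_one] using hasDerivAt_exp_neg
  | succ k ih =>
    have poissonLT_succ : poissonLT (k + 2) = fun s ↦ poissonLT (k + 1) s +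
        Real.exp (-s) * (s ^ (k + 1) / (k + 1)!) := by
      ext s
      simp only [poissonLT, sum_range_succ _ (k + 1), mul_add]
    rw [poissonLT_succ]
    refine (ih.add (hasDerivAt_exp_neg.mul
      ((hasDerivAt_pow (k + 1) t).div_const _))).congr_deriv ?_
    rw [Nat.add_sub_cancel, Nat.factorial_succ]
    push_cast
    field_simp
    ring

lemma antitoneOn_poissonLT (F : ℕ) : AntitoneOn (poissonLT F) (Ici 0) := by
  cases F with
  | zero => simp [poissonLT, AntitoneOn]
  | succ k =>
    refine antitoneOn_of_hasDerivWithinAt_nonpos (convex_Ici 0)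
      (continuous_poissonLT _).continuousOn
      (fun t _ ↦ (hasDerivAt_poissonLT k t).hasDerivWithinAt) fun t ht ↦ ?_
    have : 0 ≤ t := interior_subset ht
    exact neg_nonpos.2 (by positivity)

/-- Chernoff bound: the `j`-th term is multiplied by `s⁻¹ ^ k * s ^ j ≥ 1`. -/
lemma poissonLT_succ_le (k : ℕ) {s t : ℝ} (hs : 0 < s) (hs1 : s ≤ 1) (ht : 0 ≤ t) :
    poissonLT (k + 1) t ≤ s⁻¹ ^ k * Real.exp (-(1 - s) * t) := by
  calc poissonLT (k + 1) t
      ≤ Real.exp (-t) * ∑ j ∈ range (k + 1), s⁻¹ ^ k * ((s * t) ^ j / j !) := by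
        unfold poissonLT
        gcongr with j hj
        rw [mul_pow, mul_div_assoc, ← mul_assoc]
        refine le_mul_of_one_le_left (by positivity) ?_
        rw [inv_pow, ← div_eq_inv_mul, one_le_div (by positivity)]
        exact pow_le_pow_of_le_one hs.le hs1 (mem_range_succ_iff.1 hj)
    _ ≤ Real.exp (-t) * (s⁻¹ ^ k * Real.exp (s * t)) := by
        rw [← mul_sum]
        gcongr
        exact Real.sum_le_exp_of_nonneg (by positivity) _
    _ = s⁻¹ ^ k * Real.exp (-(1 - s) * t) := by
        rw [mul_left_comm, ← Real.exp_add]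
        ring_nf

lemma exp_neg_mul_pow_div_factorial_le_poissonLT_succ (k : ℕ) {t : ℝ} (ht : 0 ≤ t) :
    Real.exp (-t) * (t ^ k / k !) ≤ poissonLT (k + 1) t := by
  unfold poissonLT
  gcongr
  exact single_le_sum (f := fun j ↦ t ^ j / (j ! : ℝ)) (fun j _ ↦ by positivity)
    (self_mem_range_succ k)

lemma one_sub_one_sub_poissonLT_pow_nonneg (F n : ℕ) {t : ℝ} (ht : 0 ≤ t) :
    0 ≤ 1 - (1 - poissonLT F t) ^ n :=
  sub_nonneg.2 (pow_le_one₀ (sub_nonneg.2 (poissonLT_le_one F ht))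
    (sub_le_self 1 (poissonLT_nonneg F ht)))

lemma one_sub_one_sub_poissonLT_pow_le_one (F n : ℕ) {t : ℝ} (ht : 0 ≤ t) :
    1 - (1 - poissonLT F t) ^ n ≤ 1 :=
  sub_le_self 1 (pow_nonneg (sub_nonneg.2 (poissonLT_le_one F ht)) n)

lemma one_sub_one_sub_poissonLT_pow_le (F n : ℕ) {t : ℝ} (ht : 0 ≤ t) :
    1 - (1 - poissonLT F t) ^ n ≤ n * poissonLT F t := by
  have bernoulli := one_add_mul_le_pow (a := -poissonLT F t)
    (by linarith [poissonLT_le_one F ht]) n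
  rw [← sub_eq_add_neg] at bernoulli
  linarith

/-- The expected maximum of `n` independent Erlang variables of shape `F` and rate `1`, as the
integral of its tail probability. -/
noncomputable def maxErlangMean (F n : ℕ) : ℝ := ∫ t in Ioi 0, (1 - (1 - poissonLT F t) ^ n)

lemma integrableOn_one_sub_one_sub_poissonLT_pow (F n : ℕ) :
    IntegrableOn (fun t ↦ 1 - (1 - poissonLT F t) ^ n) (Ioi 0) := by
  cases F with
  | zero => simp [poissonLT]
  | succ k =>
    have continuous_tail : Continuous fun t ↦ 1 - (1 - poissonLT (k + 1) t) ^ n :=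
      continuous_const.sub ((continuous_const.sub (continuous_poissonLT _)).pow n)
    refine ((integrableOn_exp_mul_Ioi (a := -(1 - 1 / 2)) (by norm_num) 0).const_mul
      (n * (1 / 2)⁻¹ ^ k)).mono' continuous_tail.aestronglyMeasurable
      ((ae_restrict_mem measurableSet_Ioi).mono fun t (ht : 0 < t) ↦ ?_)
    rw [Real.norm_of_nonneg (one_sub_one_sub_poissonLT_pow_nonneg _ n ht.le), mul_assoc]
    refine (one_sub_one_sub_poissonLT_pow_le _ n ht.le).trans ?_
    gcongr
    exact poissonLT_succ_le k (by norm_num) (by norm_num) ht.le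

lemma maxErlangMean_le (k n : ℕ) {a s : ℝ} (ha : 0 ≤ a) (hs : 0 < s) (hs1 : s < 1) :
    maxErlangMean (k + 1) n ≤ a + n * s⁻¹ ^ k * (Real.exp (-(1 - s) * a) / (1 - s)) := by
  have integrable := integrableOn_one_sub_one_sub_poissonLT_pow (k + 1) n
  have rate_neg : -(1 - s) < 0 := by linarith
  have integral_Ioc_le : ∫ t in Ioc 0 a, (1 - (1 - poissonLT (k + 1) t) ^ n) ≤ a := by
    calc ∫ t in Ioc 0 a, (1 - (1 - poissonLT (k + 1) t) ^ n)
        ≤ ∫ t in Ioc 0 a, 1 :=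
          setIntegral_mono_on (integrable.mono_set Ioc_subset_Ioi_self) (by simp)
            measurableSet_Ioc fun t ht ↦ one_sub_one_sub_poissonLT_pow_le_one _ n ht.1.le
      _ = a := by simp [ha]
  have integral_Ioi_le : ∫ t in Ioi a, (1 - (1 - poissonLT (k + 1) t) ^ n) ≤
      n * s⁻¹ ^ k * (Real.exp (-(1 - s) * a) / (1 - s)) := by
    calc ∫ t in Ioi a, (1 - (1 - poissonLT (k + 1) t) ^ n)
        ≤ ∫ t in Ioi a, n * s⁻¹ ^ k * Real.exp (-(1 - s) * t) := by
          refine setIntegral_mono_on (integrable.mono_set (Ioi_subset_Ioi ha))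
            ((integrableOn_exp_mul_Ioi rate_neg a).const_mul _) measurableSet_Ioi
            fun t (hat : a < t) ↦ ?_
          have ht : 0 ≤ t := ha.trans hat.le
          refine (one_sub_one_sub_poissonLT_pow_le _ n ht).trans ?_
          rw [mul_assoc]
          gcongr
          exact poissonLT_succ_le k hs hs1.le ht
      _ = n * s⁻¹ ^ k * (Real.exp (-(1 - s) * a) / (1 - s)) := by
          rw [integral_const_mul, integral_exp_mul_Ioi rate_neg, neg_div_neg_eq]
  rw [maxErlangMean, ← Ioc_union_Ioi_eq_Ioi ha, setIntegral_union (Ioc_disjoint_Ioi le_rfl)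
    measurableSet_Ioi (integrable.mono_set Ioc_subset_Ioi_self)
    (integrable.mono_set (Ioi_subset_Ioi ha))]
  exact add_le_add integral_Ioc_le integral_Ioi_le

lemma mul_one_sub_exp_neg_le_maxErlangMean (F n : ℕ) {a : ℝ} (ha : 0 ≤ a) :
    a * (1 - Real.exp (-(n * poissonLT F a))) ≤ maxErlangMean F n := by
  have integrable := integrableOn_one_sub_one_sub_poissonLT_pow F n
  calc a * (1 - Real.exp (-(n * poissonLT F a)))
      = ∫ t in Ioc 0 a, (1 - Real.exp (-(n * poissonLT F a))) := by simp [ha]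
    _ ≤ ∫ t in Ioc 0 a, (1 - (1 - poissonLT F t) ^ n) := by
        refine setIntegral_mono_on (by simp) (integrable.mono_set Ioc_subset_Ioi_self)
          measurableSet_Ioc fun t ht ↦ ?_
        rw [← mul_neg, Real.exp_nat_mul]
        have poissonLT_le : poissonLT F a ≤ poissonLT F t :=
          antitoneOn_poissonLT F ht.1.le ha ht.2
        have := sub_nonneg.2 (poissonLT_le_one F ht.1.le)
        gcongr
        exact (Real.one_sub_le_exp_neg _).trans (by gcongr)
    _ ≤ maxErlangMean F n :=
        setIntegral_mono_set integrable
          ((ae_restrict_mem measurableSet_Ioi).mono fun t (ht : 0 < t) ↦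
            one_sub_one_sub_poissonLT_pow_nonneg F n ht.le)
          Ioc_subset_Ioi_self.eventuallyLE

section Expectation

lemma integral_sInf_notMem {Ω : Type*} [MeasurableSpace Ω] {μ : Measure Ω} {s : ℕ → Set Ω}
    (hs : ∀ n, MeasurableSet (s n)) (hs_anti : Antitone s) (hμs : ∑' n, μ (s n) ≠ ∞) :
    ∫ ω, ((sInf {n : ℕ | ω ∉ s n} : ℕ) : ℝ) ∂μ = (∑' n, μ (s n)).toReal := by
  have measurable_indicator (n : ℕ) : Measurable ((s n).indicator (1 : Ω → ℝ≥0∞)) :=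
    measurable_one.indicator (hs n)
  have sum_indicator_eq : ∀ᵐ ω ∂μ,
      ((sInf {n : ℕ | ω ∉ s n} : ℕ) : ℝ≥0∞) = ∑' n, (s n).indicator (1 : Ω → ℝ≥0∞) ω := by
    filter_upwards [ae_eventually_notMem hμs] with ω hω
    have mem_iff (n : ℕ) : ω ∈ s n ↔ n < sInf {n : ℕ | ω ∉ s n} :=
      ⟨fun hn ↦ lt_of_not_ge fun hle ↦ Nat.sInf_mem hω.exists (hs_anti hle hn),
        fun hn ↦ not_not.1 (Nat.notMem_of_lt_sInf hn)⟩
    rw [tsum_eq_sum (s := Finset.range (sInf {n : ℕ | ω ∉ s n})) fun n hn ↦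
        indicator_of_notMem (fun hmem ↦ hn (Finset.mem_range.2 ((mem_iff n).1 hmem))) _,
      Finset.sum_congr rfl fun n hn ↦
        indicator_of_mem ((mem_iff n).2 (Finset.mem_range.1 hn)) (1 : Ω → ℝ≥0∞)]
    simp
  have lintegral_eq : ∫⁻ ω, ((sInf {n : ℕ | ω ∉ s n} : ℕ) : ℝ≥0∞) ∂μ = ∑' n, μ (s n) := by
    rw [lintegral_congr_ae sum_indicator_eq,
      lintegral_tsum fun n ↦ (measurable_indicator n).aemeasurable]
    simp only [lintegral_indicator_one (hs _)]
  rw [← lintegral_eq, ← integral_toReal]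
  · simp
  · exact (Measurable.tsum measurable_indicator).aemeasurable.congr
      (EventuallyEq.symm sum_indicator_eq)
  · simp

variable {ι : Type*} [Fintype ι] [DecidableEq ι] [MeasurableSpace ι] [MeasurableSingletonClass ι]

lemma tsum_measure_incomplete {μ : Measure (ℕ → ι)} [IsProbabilityMeasure μ] {ν : Measure ι}
    (hI : iIndepFun (fun i (x : ℕ → ι) ↦ x i) μ) (hX : ∀ i, μ.map (fun x ↦ x i) = ν)
    (hν : ∀ c, ν {c} = (Fintype.card ι : ℝ≥0∞)⁻¹) (F : ℕ) :
    ∑' n, μ (incomplete F n) =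
      ENNReal.ofReal (Fintype.card ι * maxErlangMean F (Fintype.card ι)) := by
  have : IsProbabilityMeasure ν :=
    hX 0 ▸ Measure.isProbabilityMeasure_map (measurable_pi_apply 0).aemeasurable
  have : Nonempty ι := nonempty_of_isProbabilityMeasure ν
  set B := Fintype.card ι
  have B_pos : (0 : ℝ≥0) < B := Nat.cast_pos.2 Fintype.card_pos
  have rate_eq (t : ℝ≥0) (c : ι) : B * t * (ν {c}).toNNReal = t := by
    rw [hν, ENNReal.toNNReal_inv, ENNReal.toNNReal_natCast]
    field_simp
  have lintegral_eq {t : ℝ} (ht : 0 < t) :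
      ∫⁻ n, μ (incomplete F n) ∂poissonMeasure (B * t.toNNReal) =
        ENNReal.ofReal (1 - (1 - poissonLT F t) ^ B) := by
    have one_sub_poissonLT_nonneg := sub_nonneg.2 (poissonLT_le_one F ht.le)
    simp only [lintegral_incomplete_poissonMeasure hI hX, rate_eq, poissonMeasure_Ici,
      Real.coe_toNNReal t ht.le, prod_const, card_univ]
    rw [← ENNReal.ofReal_pow one_sub_poissonLT_nonneg, ENNReal.ofReal_sub _ (by positivity),
      ENNReal.ofReal_one]
  rw [tsum_eq_lintegral_poissonMeasure B_pos,
    setLIntegral_congr_fun measurableSet_Ioi fun t ↦ lintegral_eq,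
    ← ofReal_integral_eq_lintegral_ofReal (integrableOn_one_sub_one_sub_poissonLT_pow F B)
      ((ae_restrict_mem measurableSet_Ioi).mono fun t (ht : 0 < t) ↦
        one_sub_one_sub_poissonLT_pow_nonneg F B ht.le),
    ENNReal.ofReal_mul B.cast_nonneg, ENNReal.ofReal_natCast, ENNReal.coe_natCast]
  rfl

lemma integral_coverTimeMulti {B : ℕ} {μ : Measure (ℕ → Fin B)} [IsProbabilityMeasure μ]
    (hI : iIndepFun (fun i (ω : ℕ → Fin B) ↦ ω i) μ)
    (hX : ∀ i, μ.map (fun ω ↦ ω i) = uniformFin B) (F : ℕ) :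
    ∫ ω, (coverTimeMulti B F ω : ℝ) ∂μ = B * maxErlangMean F B := by
  have tsum_eq := tsum_measure_incomplete hI hX (by simp [uniformFin]) F
  have coverTimeMulti_eq (ω : ℕ → Fin B) :
      coverTimeMulti B F ω = sInf {n | ω ∉ incomplete F n} := by
    simp [coverTimeMulti, incomplete, drawCount]
  simp only [coverTimeMulti_eq]
  rw [integral_sInf_notMem (measurableSet_incomplete F) (incomplete_anti F)
    (tsum_eq ▸ ENNReal.ofReal_ne_top), tsum_eq, Fintype.card_fin, ENNReal.toReal_ofReal]
  exact mul_nonneg B.cast_nonneg (setIntegral_nonneg measurableSet_Ioi fun t (ht : 0 < t) ↦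
    one_sub_one_sub_poissonLT_pow_nonneg F B ht.le)

end Expectation

section Asymptotics

lemma natCast_pos_of_log_pos {n : ℕ} (hn : 0 < Real.log n) : (0 : ℝ) < n := by
  refine n.cast_nonneg.lt_of_ne fun h ↦ ?_
  rw [← h, Real.log_zero] at hn
  exact hn.false

lemma log_pos_of_one_le_log_log {n : ℕ} (hn : 1 ≤ Real.log (Real.log n)) : 0 < Real.log n := by
  refine (Real.log_natCast_nonneg n).lt_of_ne fun h ↦ ?_
  rw [← h, Real.log_zero] at hn
  linarith

/-- The Chernoff parameter `1 / log n` makes the tail beyond `log n + k log log n` bounded. -/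
lemma maxErlangMean_le_log_add (k : ℕ) {n : ℕ} (hn : 2 ≤ Real.log n) :
    maxErlangMean (k + 1) n ≤
      Real.log n + k * Real.log (Real.log n) + 2 * Real.exp (1 + k) := by
  set L := Real.log n
  have hL : 0 < L := by linarith
  have hn_pos : (0 : ℝ) < n := natCast_pos_of_log_pos hL
  have log_L_nonneg : 0 ≤ Real.log L := Real.log_nonneg (by linarith)
  have inv_le : L⁻¹ ≤ 1 / 2 := by
    rw [one_div]
    exact inv_anti₀ two_pos hn
  have exponent_le : L⁻¹ * (L + k * Real.log L) ≤ 1 + k := by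
    rw [mul_add, inv_mul_cancel₀ hL.ne', mul_left_comm]
    gcongr
    refine mul_le_of_le_one_right k.cast_nonneg ?_
    rw [inv_mul_le_one₀ hL]
    linarith [Real.log_le_sub_one_of_pos hL]
  have exp_eq : n * L⁻¹⁻¹ ^ k * Real.exp (-(1 - L⁻¹) * (L + k * Real.log L)) =
      Real.exp (L⁻¹ * (L + k * Real.log L)) := by
    have pow_eq : L ^ k = Real.exp (k * Real.log L) := by
      rw [Real.exp_nat_mul, Real.exp_log hL]
    have cast_eq : (n : ℝ) = Real.exp L := (Real.exp_log hn_pos).symm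
    rw [inv_inv, pow_eq, cast_eq, ← Real.exp_add, ← Real.exp_add]
    ring_nf
  refine (maxErlangMean_le k n (a := L + k * Real.log L) (s := L⁻¹) (by positivity)
    (by positivity) (by linarith)).trans ?_
  rw [← mul_div_assoc, exp_eq]
  gcongr
  rw [div_le_iff₀ (by linarith)]
  calc Real.exp (L⁻¹ * (L + k * Real.log L))
      ≤ Real.exp (1 + k) := Real.exp_le_exp.2 exponent_le
    _ = 2 * Real.exp (1 + k) * (1 - 1 / 2) := by ring
    _ ≤ 2 * Real.exp (1 + k) * (1 - L⁻¹) := by gcongr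

lemma log_le_half {x : ℝ} (hx : 0 < x) : Real.log x ≤ x / 2 := by
  have log_half_le := Real.log_le_sub_one_of_pos (half_pos hx)
  rw [Real.log_div hx.ne' two_ne_zero] at log_half_le
  linarith [Real.log_two_lt_d9]

lemma half_log_le_log_add (k : ℕ) {n : ℕ} (hn : 1 ≤ Real.log (Real.log n)) :
    Real.log n / 2 ≤
      Real.log n + k * Real.log (Real.log n) - 2 * Real.log (Real.log (Real.log n)) := by
  have log_log_le := log_le_half (log_pos_of_one_le_log_log hn)
  have log_log_log_le := log_le_half (one_pos.trans_le hn)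
  have mul_nonneg_log_log : 0 ≤ k * Real.log (Real.log n) := by positivity
  linarith

/-- Stopping `2 log log log n` short of the crossing point makes `n * poissonLT` as large as
`(log log n) ^ 2`, whose exponential beats `log n`. -/
lemma le_mul_poissonLT (k : ℕ) {n : ℕ} (hn : 1 ≤ Real.log (Real.log n)) :
    Real.log (Real.log n) ^ 2 / (2 ^ k * k !) ≤ n * poissonLT (k + 1)
      (Real.log n + k * Real.log (Real.log n) - 2 * Real.log (Real.log (Real.log n))) := by
  have half_le := half_log_le_log_add k hn
  set L := Real.log n
  set l := Real.log L
  set a := L + k * l - 2 * Real.log l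
  have hL : 0 < L := log_pos_of_one_le_log_log hn
  have hn_pos : (0 : ℝ) < n := natCast_pos_of_log_pos hL
  have mul_exp_eq : n * Real.exp (-a) = l ^ 2 / L ^ k := by
    rw [show -a = -L - k * l + (2 : ℕ) * Real.log l by simp only [a]; push_cast; ring,
      Real.exp_add, Real.exp_sub, Real.exp_neg, Real.exp_nat_mul, Real.exp_nat_mul,
      Real.exp_log hn_pos, Real.exp_log hL, Real.exp_log (one_pos.trans_le hn)]
    field_simp
  calc l ^ 2 / (2 ^ k * k !)
      = l ^ 2 / L ^ k * ((L / 2) ^ k / k !) := by rw [div_pow]; field_simp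
    _ ≤ n * Real.exp (-a) * (a ^ k / k !) := by
        rw [mul_exp_eq]
        gcongr
    _ ≤ n * poissonLT (k + 1) a := by
        rw [mul_assoc]
        gcongr
        exact exp_neg_mul_pow_div_factorial_le_poissonLT_succ k (by linarith)

lemma log_add_le_maxErlangMean (k : ℕ) {n : ℕ} (hn : 1 ≤ Real.log (Real.log n)) :
    Real.log n + k * Real.log (Real.log n) - 2 * Real.log (Real.log (Real.log n)) -
      (1 + k) * Real.exp (2 ^ k * k ! / 4) ≤ maxErlangMean (k + 1) n := by
  have half_le := half_log_le_log_add k hn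
  have le_mul := le_mul_poissonLT k hn
  set L := Real.log n
  set l := Real.log L
  set a := L + k * l - 2 * Real.log l
  set C : ℝ := 2 ^ k * (k !)
  have hL : 0 < L := log_pos_of_one_le_log_log hn
  have hC : 0 < C := by positivity
  have a_le : a ≤ (1 + k) * L := by
    have : k * l ≤ k * L := by
      gcongr
      linarith [log_le_half hL]
    linarith [Real.log_nonneg hn]
  have exponent_le : l - l ^ 2 / C ≤ C / 4 := by
    rw [sub_le_iff_le_add, ← sub_le_iff_le_add', le_div_iff₀ hC]
    linarith [sq_nonneg (l - C / 2)]
  have loss_le : a * Real.exp (-(n * poissonLT (k + 1) a)) ≤ (1 + k) * Real.exp (C / 4) :=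
    calc a * Real.exp (-(n * poissonLT (k + 1) a))
        ≤ (1 + k) * L * Real.exp (-(l ^ 2 / C)) := by gcongr
      _ = (1 + k) * Real.exp (l - l ^ 2 / C) := by
          rw [sub_eq_add_neg, Real.exp_add, Real.exp_log hL, mul_assoc]
      _ ≤ (1 + k) * Real.exp (C / 4) := by gcongr
  have := mul_one_sub_exp_neg_le_maxErlangMean (k + 1) n (a := a) (by linarith)
  linarith

lemma tendsto_maxErlangMean (k : ℕ) :
    Tendsto (fun n : ℕ ↦ (maxErlangMean (k + 1) n - Real.log n) / Real.log (Real.log n))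
      atTop (𝓝 k) := by
  have tendsto_log : Tendsto (fun n : ℕ ↦ Real.log n) atTop atTop :=
    Real.tendsto_log_atTop.comp tendsto_natCast_atTop_atTop
  have tendsto_log_log := Real.tendsto_log_atTop.comp tendsto_log
  have const_div (c : ℝ) : Tendsto (fun n : ℕ ↦ c / Real.log (Real.log n)) atTop (𝓝 0) :=
    tendsto_log_log.const_div_atTop c
  have log_div : Tendsto (fun n : ℕ ↦ Real.log (Real.log (Real.log n)) / Real.log (Real.log n))
      atTop (𝓝 0) :=
    Real.isLittleO_log_id_atTop.tendsto_div_nhds_zero.comp tendsto_log_log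
  have tendsto_lower : Tendsto (fun n : ℕ ↦ k -
      2 * (Real.log (Real.log (Real.log n)) / Real.log (Real.log n)) -
        (1 + k) * Real.exp (2 ^ k * k ! / 4) / Real.log (Real.log n)) atTop (𝓝 (k : ℝ)) := by
    simpa using ((log_div.const_mul 2).const_sub (k : ℝ)).sub (const_div _)
  have tendsto_upper : Tendsto (fun n : ℕ ↦ k + 2 * Real.exp (1 + k) / Real.log (Real.log n))
      atTop (𝓝 (k : ℝ)) := by
    simpa using (const_div _).const_add (k : ℝ)
  refine tendsto_of_tendsto_of_tendsto_of_le_of_le' tendsto_lower tendsto_upper ?_ ?_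
  · filter_upwards [tendsto_log_log.eventually_ge_atTop 1] with n hn
    have mean_bound := log_add_le_maxErlangMean k hn
    have log_log_pos : (0 : ℝ) < Real.log (Real.log n) := one_pos.trans_le hn
    rw [le_div_iff₀ log_log_pos]
    field_simp
    linarith
  · filter_upwards [tendsto_log_log.eventually_ge_atTop 1, tendsto_log.eventually_ge_atTop 2]
      with n hn hn'
    have mean_bound := maxErlangMean_le_log_add k hn'
    have log_log_pos : (0 : ℝ) < Real.log (Real.log n) := one_pos.trans_le hn
    rw [div_le_iff₀ log_log_pos]
    field_simp
    linarith

end Asymptotics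

end DixieCup

/-- **Newman–Shepp double dixie cup asymptotics.** Fix `F ≥ 1`. For any family `μ B` of
probability measures on `ℕ → Fin B` (for `B ≥ 1`) under which the draws are independent and
uniform on the `B` coupons, `(E[T_B^{(F)}] - B ln B)/(B ln ln B)` converges to `F - 1` as
`B → ∞`; equivalently `E[T_B^{(F)}] = B ln B + (F-1) B ln ln B + o(B ln ln B)`. -/
theorem newman_shepp_double_dixie_cup
    (F : ℕ) (hF : 1 ≤ F)
    (μ : ∀ B : ℕ, Measure (ℕ → Fin B))
    (hprob : ∀ B : ℕ, 1 ≤ B → IsProbabilityMeasure (μ B))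
    (hIndep : ∀ B : ℕ, 1 ≤ B →
      iIndepFun (fun i (ω : ℕ → Fin B) => ω i) (μ B))
    (hUnif : ∀ B : ℕ, 1 ≤ B → ∀ i : ℕ, (μ B).map (fun ω => ω i) = uniformFin B) :
    Tendsto
      (fun B : ℕ =>
        ((∫ ω, (coverTimeMulti B F ω : ℝ) ∂(μ B)) - B * Real.log B)
          / (B * Real.log (Real.log B)))
      atTop (nhds ((F : ℝ) - 1)) := by
  obtain ⟨k, rfl⟩ := Nat.exists_eq_add_of_le' hF
  rw [Nat.cast_add_one, add_sub_cancel_right]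
  refine (DixieCup.tendsto_maxErlangMean k).congr' ?_
  filter_upwards [eventually_ge_atTop 1] with B hB
  have := hprob B hB
  have hB_ne : (B : ℝ) ≠ 0 := Nat.cast_ne_zero.2 (Nat.one_le_iff_ne_zero.1 hB)
  rw [DixieCup.integral_coverTimeMulti (hIndep B hB) (hUnif B hB), ← mul_sub,
    mul_div_mul_left _ _ hB_ne]
end
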